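/- Let S = {s_1,…,s_K} (K ≥ 5) be a protocol sequence set in which all sequences have the same duty factor f = n/d with n, d positive integers, gcd(n, d) = 1 and 0 < f < 1. Suppose S is TI with MPR capability γ = K−3 and R_i > 0 for every user i. If (i) K−3 is a prime number, (ii) K−2 is even, and (iii) gcd((K−2)/2, d) = 1, then S is SI. -/

import Mathlib

open Finset

/-- Generalized Hamming cross-correlation of the sequences indexed by `A`
(only the shifts `τ j` with `j ∈ A` matter). -/
def Hcorr {K L : ℕ} [NeZero L] (s : Fin K → ZMod L → ℕ)
    (A : Finset (Fin K)) (τ : Fin K → ZMod L) : ℕ :=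
  ∑ t : ZMod L, ∏ j ∈ A, s j (t + τ j)

/-- The family `s` is shift-invariant (SI): every generalized Hamming
cross-correlation is independent of the relative shifts. -/
def IsSI {K L : ℕ} [NeZero L] (s : Fin K → ZMod L → ℕ) : Prop :=
  ∀ A : Finset (Fin K), A.Nonempty →
    ∀ τ τ' : Fin K → ZMod L, Hcorr s A τ = Hcorr s A τ'

/-- Number of slots `t` in one period where user `i` transmits and at most
`γ - 1` other users transmit. -/
def Rcount {K L : ℕ} [NeZero L] (s : Fin K → ZMod L → ℕ) (γ : ℕ)
    (i : Fin K) (τ : Fin K → ZMod L) : ℕ :=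
  (Finset.univ.filter (fun t : ZMod L =>
    s i (t + τ i) = 1 ∧ ∑ j ∈ Finset.univ.erase i, s j (t + τ j) ≤ γ - 1)).card

/-- Throughput of user `i` under MPR capability `γ` at shifts `τ`. -/
def R {K L : ℕ} [NeZero L] (s : Fin K → ZMod L → ℕ) (γ : ℕ)
    (i : Fin K) (τ : Fin K → ZMod L) : ℚ :=
  (Rcount s γ i τ : ℚ) / L

/-- The family `s` is throughput-invariant (TI) with MPR capability `γ`. -/
def IsTI {K L : ℕ} [NeZero L] (s : Fin K → ZMod L → ℕ) (γ : ℕ) : Prop :=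
  ∀ i : Fin K, ∀ τ τ' : Fin K → ZMod L, R s γ i τ = R s γ i τ'

/-- Duty factor of a single sequence. -/
def duty {L : ℕ} [NeZero L] (s : ZMod L → ℕ) : ℚ :=
  (∑ t : ZMod L, (s t : ℚ)) / L

/-- truncated sum of products over subsets of size at most `k` -/
def truncE {ι : Type*} [DecidableEq ι] (y : ι → ℚ) (k : ℕ) (T : Finset ι) : ℚ :=
  ∑ Z ∈ T.powerset, if Z.card ≤ k then ∏ j ∈ Z, y j else 0

lemma truncE_insert {ι : Type*} [DecidableEq ι] (y : ι → ℚ) (k : ℕ) (a : ι) (T : Finset ι)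
    (ha : a ∉ T) : truncE y (k + 1) (insert a T) = truncE y (k + 1) T + y a * truncE y k T := by
  unfold truncE
  rw [Finset.sum_powerset_insert ha, Finset.mul_sum]
  congr 1
  apply Finset.sum_congr rfl
  intro Z hZ
  have haZ : a ∉ Z := fun h => ha (Finset.mem_powerset.1 hZ h)
  rw [Finset.card_insert_of_notMem haZ, Finset.prod_insert haZ]
  simp [mul_ite]

lemma truncE_zero {ι : Type*} [DecidableEq ι] (y : ι → ℚ) (T : Finset ι) :
    truncE y 0 T = 1 := by
  unfold truncE
  rw [Finset.sum_eq_single ∅]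
  · simp
  · intro Z _ hZ
    simp [hZ]
  · simp

lemma truncE_one {ι : Type*} [DecidableEq ι] (y : ι → ℚ) (T : Finset ι) :
    truncE y 1 T = 1 + ∑ j ∈ T, y j := by
  induction T using Finset.induction_on with
  | empty => simp [truncE]
  | insert a T ha ih =>
    rw [truncE_insert y 0 a T ha, truncE_zero, Finset.sum_insert ha, ih]; ring

lemma truncE_two {ι : Type*} [DecidableEq ι] (y : ι → ℚ) (T : Finset ι) :
    truncE y 2 T = 1 + ∑ j ∈ T, y j + ((∑ j ∈ T, y j) ^ 2 - ∑ j ∈ T, y j ^ 2) / 2 := by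
  induction T using Finset.induction_on with
  | empty => simp [truncE]
  | insert a T ha ih =>
    rw [truncE_insert y 1 a T ha, truncE_one, Finset.sum_insert ha, Finset.sum_insert ha, ih]; ring

/-- the sum of the indicators of "exactly the users in `Z` are silent" -/
def Mind {K : ℕ} (i : Fin K) (x z : Fin K → ℚ) : ℚ :=
  ∑ Z ∈ (univ.erase i).powerset,
    if Z.card ≤ 2 then ∏ j, (if j ∈ Z then z j else x j) else 0

lemma Mind_eval {K : ℕ} (hK : 5 ≤ K) (i : Fin K) (x : Fin K → ℕ) (hx : ∀ j, x j = 0 ∨ x j = 1) :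
    (if x i = 1 ∧ ∑ j ∈ univ.erase i, x j ≤ K - 3 - 1 then (1 : ℚ) else 0)
      + Mind i (fun j => (x j : ℚ)) (fun j => 1 - (x j : ℚ)) = x i := by
  classical
  set Z0 : Finset (Fin K) := univ.filter (fun j => x j = 0) with hZ0
  have hprod : ∀ Z : Finset (Fin K),
      ∏ j, (if j ∈ Z then (1 - (x j : ℚ)) else (x j : ℚ)) = if Z = Z0 then 1 else 0 := by
    intro Z
    split_ifs with h
    · apply Finset.prod_eq_one
      intro j _
      rw [h]
      rcases hx j with h0 | h0 <;> simp [hZ0, h0]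
    · have : ∃ j, ¬ (j ∈ Z ↔ j ∈ Z0) := by
        by_contra hcon
        push Not at hcon
        exact h (Finset.ext hcon)
      obtain ⟨j, hj⟩ := this
      apply Finset.prod_eq_zero (Finset.mem_univ j)
      have hm : j ∈ Z0 ↔ x j = 0 := by simp [hZ0]
      rw [hm] at hj
      rcases hx j with h0 | h0
      · have : j ∉ Z := by tauto
        simp [this, h0]
      · have : j ∈ Z := by
          by_contra hc
          exact hj ⟨fun h => absurd h hc, fun h => by omega⟩
        simp [this, h0]
  have hM : Mind i (fun j => (x j : ℚ)) (fun j => 1 - (x j : ℚ))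
      = if i ∉ Z0 ∧ Z0.card ≤ 2 then 1 else 0 := by
    unfold Mind
    simp only [hprod]
    have : ∀ Z : Finset (Fin K), (if Z.card ≤ 2 then (if Z = Z0 then (1:ℚ) else 0) else 0)
        = if Z = Z0 then (if Z0.card ≤ 2 then 1 else 0) else 0 := by
      intro Z
      by_cases h : Z = Z0
      · simp [h]
      · simp [h]
    simp only [this]
    rw [Finset.sum_ite_eq']
    have : Z0 ∈ (univ.erase i).powerset ↔ i ∉ Z0 := by
      rw [Finset.mem_powerset, Finset.subset_erase]
      simp
    simp only [this]
    by_cases h : i ∈ Z0 <;> simp [h]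
  rw [hM]
  rcases hx i with h0 | h0
  · have : i ∈ Z0 := by simp [hZ0, h0]
    simp [h0, this]
  · have hi : i ∉ Z0 := by simp [hZ0, h0]
    have h1 : ∑ j, x j + Z0.card = K := by
      rw [hZ0, Finset.card_filter, ← Finset.sum_add_distrib]
      have : ∀ j, x j + (if x j = 0 then 1 else 0) = 1 := by
        intro j
        rcases hx j with h | h <;> simp [h]
      simp [this]
    have h2 : x i + ∑ j ∈ univ.erase i, x j = ∑ j, x j :=
      Finset.add_sum_erase _ _ (Finset.mem_univ i)
    by_cases hc : Z0.card ≤ 2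
    · have : ¬ (∑ j ∈ univ.erase i, x j ≤ K - 3 - 1) := by omega
      simp [hc, hi, this, h0]
    · have : (∑ j ∈ univ.erase i, x j ≤ K - 3 - 1) := by omega
      simp [hc, this, h0]

/-- averaging a product over independent weighted shifts -/
lemma avg_prod {K L : ℕ} [NeZero L] (w φ : Fin K → ZMod L → ℚ) (t : ZMod L) :
    ∑ τ : Fin K → ZMod L, (∏ j, w j (τ j)) * ∏ j, φ j (t + τ j)
      = ∏ j, ∑ v, w j v * φ j (t + v) := by
  rw [Finset.prod_univ_sum]
  simp [Finset.prod_mul_distrib]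

lemma avg_Mind {K L : ℕ} [NeZero L] (i : Fin K) (w x z : Fin K → ZMod L → ℚ) (t : ZMod L) :
    ∑ τ : Fin K → ZMod L, (∏ j, w j (τ j)) * Mind i (fun j => x j (t + τ j)) (fun j => z j (t + τ j))
      = Mind i (fun j => ∑ v, w j v * x j (t + v)) (fun j => ∑ v, w j v * z j (t + v)) := by
  unfold Mind
  simp only [Finset.mul_sum]
  rw [Finset.sum_comm]
  apply Finset.sum_congr rfl
  intro Z _
  split_ifs with h
  · have := avg_prod w (fun j => if j ∈ Z then z j else x j) t
    calc _ = ∑ τ : Fin K → ZMod L, (∏ j, w j (τ j)) *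
          ∏ j, (fun j => if j ∈ Z then z j else x j) j (t + τ j) := by
          apply Finset.sum_congr rfl
          intro τ _
          congr 1
          apply Finset.prod_congr rfl
          intro j _
          simp only
          split_ifs <;> rfl
      _ = _ := this
      _ = _ := by
          apply Finset.prod_congr rfl
          intro j _
          split_ifs <;> rfl
  · simp

lemma Mind_factor {K : ℕ} (i : Fin K) (A : Finset (Fin K)) (u : Fin K → ℚ) (f : ℚ) (hf : f ≠ 0) :
    Mind i (fun j => if j ∈ A then u j else f) (fun j => if j ∈ A then - u j else 1 - f)
      = (∏ j ∈ A, u j) * (f ^ (Aᶜ).card *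
        truncE (fun j => if j ∈ A then -1 else (1 - f) / f) 2 (univ.erase i)) := by
  unfold Mind truncE
  rw [← mul_assoc, Finset.mul_sum]
  apply Finset.sum_congr rfl
  intro Z _
  split_ifs with h
  · have h1 : (∏ j ∈ A, u j) * f ^ (Aᶜ).card = ∏ j, if j ∈ A then u j else f := by
      rw [Finset.prod_ite]
      simp [Finset.filter_not, Finset.compl_eq_univ_sdiff]
    have h2 : ∏ j ∈ Z, (if j ∈ A then (-1 : ℚ) else (1 - f) / f)
        = ∏ j, if j ∈ Z then (if j ∈ A then (-1 : ℚ) else (1 - f) / f) else 1 := by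
      simp [Finset.prod_ite_mem]
    rw [h1, h2, ← Finset.prod_mul_distrib]
    apply Finset.prod_congr rfl
    intro j _
    by_cases hj : j ∈ Z <;> by_cases hA : j ∈ A <;> simp [hj, hA]
    field_simp
  · simp

lemma sum_shift {L : ℕ} [NeZero L] (g : ZMod L → ℚ) (t : ZMod L) :
    ∑ v, g (t + v) = ∑ v, g v :=
  Fintype.sum_equiv (Equiv.addLeft t) _ _ (fun _ => rfl)

lemma sum_shift_right {L : ℕ} [NeZero L] (g : ZMod L → ℚ) (t : ZMod L) :
    ∑ v, g (v + t) = ∑ v, g v :=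
  Fintype.sum_equiv (Equiv.addRight t) _ _ (fun _ => rfl)

lemma key {K L : ℕ} [NeZero L] (x : Fin K → ZMod L → ℚ) (f : ℚ) (hf : f ≠ 0)
    (hx : ∀ j, ∑ t, x j t = f * L) (i : Fin K) (C : ℚ)
    (hC : ∀ τ : Fin K → ZMod L,
      ∑ t, Mind i (fun j => x j (t + τ j)) (fun j => 1 - x j (t + τ j)) = C)
    (A : Finset (Fin K)) (hA : A.Nonempty) (τ : Fin K → ZMod L) :
    (∑ t, ∏ j ∈ A, (x j (t + τ j) - f)) *
        truncE (fun j => if j ∈ A then -1 else (1 - f) / f) 2 (univ.erase i) = 0 := by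
  classical
  have hL : (L : ℚ) ≠ 0 := by exact_mod_cast NeZero.ne L
  set w : Fin K → ZMod L → ℚ := fun j v =>
    if j ∈ A then ((if v = τ j then 1 else 0) - 1 / L) else 1 / L with hw
  have hcard : ∑ _v : ZMod L, (1 : ℚ) = L := by simp [ZMod.card]
  have hwg : ∀ (j : Fin K) (g : ZMod L → ℚ), ∑ v, w j v * g v
      = if j ∈ A then g (τ j) - (∑ v, g v) / L else (∑ v, g v) / L := by
    intro j g
    by_cases hj : j ∈ A
    · simp only [hw, hj, if_true, sub_mul, Finset.sum_sub_distrib, ite_mul, one_mul, zero_mul]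
      rw [Finset.sum_ite_eq', ← Finset.mul_sum]
      simp
      ring
    · simp only [hw, hj, if_false]
      rw [← Finset.mul_sum]
      ring
  have hE : ∀ t, ∑ τ' : Fin K → ZMod L, (∏ j, w j (τ' j)) *
      Mind i (fun j => x j (t + τ' j)) (fun j => 1 - x j (t + τ' j))
      = (∏ j ∈ A, (x j (t + τ j) - f)) * (f ^ (Aᶜ).card *
        truncE (fun j => if j ∈ A then -1 else (1 - f) / f) 2 (univ.erase i)) := by
    intro t
    rw [avg_Mind i w x (fun j v => 1 - x j v) t, ← Mind_factor i A _ f hf]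
    congr 1
    · funext j
      rw [hwg j (fun v => x j (t + v)), sum_shift, hx]
      split_ifs <;> field_simp
    · funext j
      rw [hwg j (fun v => 1 - x j (t + v)), sum_shift (fun v => 1 - x j v),
        Finset.sum_sub_distrib, hx, hcard]
      split_ifs
      · field_simp
        ring
      · field_simp
  have hzero : ∑ t, ∑ τ' : Fin K → ZMod L, (∏ j, w j (τ' j)) *
      Mind i (fun j => x j (t + τ' j)) (fun j => 1 - x j (t + τ' j)) = 0 := by
    rw [Finset.sum_comm]
    simp only [← Finset.mul_sum, hC]
    rw [← Finset.sum_mul]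
    have h1 : ∑ τ' : Fin K → ZMod L, ∏ j, w j (τ' j) = ∏ j, ∑ v, w j v := by
      rw [Finset.prod_univ_sum]
      simp
    rw [h1]
    obtain ⟨j, hj⟩ := hA
    rw [Finset.prod_eq_zero (Finset.mem_univ j), zero_mul]
    have := hwg j (fun _ => 1)
    simp only [mul_one, hj, if_true, hcard] at this
    rw [this, div_self hL, sub_self]
  simp only [hE] at hzero
  rw [← Finset.sum_mul] at hzero
  have hp : f ^ (Aᶜ).card ≠ 0 := pow_ne_zero _ hf
  have h3 : f ^ (Aᶜ).card * ((∑ t, ∏ j ∈ A, (x j (t + τ j) - f)) *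
        truncE (fun j => if j ∈ A then -1 else (1 - f) / f) 2 (univ.erase i)) = 0 := by
    rw [← hzero]; ring
  exact (mul_eq_zero.1 h3).resolve_left hp

lemma trunc_formula {K : ℕ} (i : Fin K) (A : Finset (Fin K)) (y : ℚ) (b r : ℕ)
    (hb : ((univ.erase i).filter (· ∈ A)).card = b)
    (hr : ((univ.erase i).filter (· ∉ A)).card = r) :
    2 * truncE (fun j => if j ∈ A then -1 else y) 2 (univ.erase i)
      = r * (r - 1) * y ^ 2 - 2 * r * (b - 1) * y + (b - 1) * (b - 2) := by
  rw [truncE_two]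
  simp only [ite_pow]
  rw [Finset.sum_ite, Finset.sum_ite]
  simp only [Finset.sum_const, hb, hr, nsmul_eq_mul]
  ring

/-- the arithmetic core -/
lemma arith_core (b r : ℚ) (y : ℚ) (hy : 0 < y) (hb : 1 ≤ b) (hr : 1 ≤ r) (hbr : 2 ≤ b + r - 1)
    (h1 : r * (r - 1) * y ^ 2 - 2 * r * (b - 1) * y + (b - 1) * (b - 2) = 0)
    (h2 : (r - 1) * (r - 2) * y ^ 2 - 2 * (r - 1) * b * y + b * (b - 1) = 0) : False := by
  have h3 : ((r - 1) * y - (b - 1)) * (y + 1) = 0 := by linear_combination (h1 - h2) / 2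
  have h4 : (r - 1) * y = b - 1 := by
    rcases mul_eq_zero.1 h3 with h | h
    · linarith
    · linarith
  have h5 : (b - 1) * (b + r - 2) = 0 := by
    linear_combination -(r - 1) * h1 + (r * ((r - 1) * y + (b - 1)) - 2 * r * (b - 1)) * h4
  rcases mul_eq_zero.1 h5 with h | h
  · rw [h] at h4
    rcases mul_eq_zero.1 h4 with h6 | h6
    · linarith
    · linarith
  · linarith

lemma U_zero {K L : ℕ} [NeZero L] (hK : 5 ≤ K) (x : Fin K → ZMod L → ℚ) (f : ℚ) (hf : 0 < f)
    (hf1 : f < 1)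
    (hx : ∀ j, ∑ t, x j t = f * L) (C : Fin K → ℚ)
    (hC : ∀ i, ∀ τ : Fin K → ZMod L,
      ∑ t, Mind i (fun j => x j (t + τ j)) (fun j => 1 - x j (t + τ j)) = C i)
    (A : Finset (Fin K)) (hA : A.Nonempty) (τ : Fin K → ZMod L) :
    (∑ t, ∏ j ∈ A, (x j (t + τ j) - f)) = 0 := by
  by_cases hA1 : A.card = 1
  · obtain ⟨j, rfl⟩ := Finset.card_eq_one.1 hA1
    simp only [Finset.prod_singleton, Finset.sum_sub_distrib]
    rw [sum_shift_right, hx]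
    simp [ZMod.card]
    ring
  have hA2 : 2 ≤ A.card := by
    have := hA.card_pos
    omega
  by_contra hne
  have hT : ∀ i, truncE (fun j => if j ∈ A then -1 else (1 - f) / f) 2 (univ.erase i) = 0 :=
    fun i => (mul_eq_zero.1 (key x f hf.ne' hx i (C i) (hC i) A hA τ)).resolve_left hne
  have hy : 0 < (1 - f) / f := div_pos (by linarith) hf
  have hcc : (Aᶜ).card + A.card = K := by
    rw [Finset.card_compl, Fintype.card_fin]
    have := Finset.card_le_univ A
    rw [Fintype.card_fin] at this
    omega
  have hin : ∀ i ∈ A, ((univ.erase i).filter (· ∈ A)).card = A.card - 1 ∧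
      ((univ.erase i).filter (· ∉ A)).card = (Aᶜ).card := by
    intro i hi
    constructor
    · rw [← Finset.card_erase_of_mem hi]
      congr 1
      ext j
      simp
    · congr 1
      ext j
      simp
      rintro h rfl
      exact h hi
  have hout : ∀ i ∉ A, ((univ.erase i).filter (· ∈ A)).card = A.card ∧
      ((univ.erase i).filter (· ∉ A)).card = (Aᶜ).card - 1 := by
    intro i hi
    constructor
    · congr 1
      ext j
      simp
      rintro h rfl
      exact hi h
    · rw [← Finset.card_erase_of_mem (Finset.mem_compl.2 hi)]
      congr 1
      ext j
      simp
  obtain ⟨i, hi⟩ := hA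
  have e1 := trunc_formula i A ((1 - f) / f) _ _ (hin i hi).1 (hin i hi).2
  rw [hT i, mul_zero] at e1
  have ccast : ((A.card - 1 : ℕ) : ℚ) = A.card - 1 := by
    push_cast [Nat.cast_sub (by omega : 1 ≤ A.card)]; ring
  rw [ccast] at e1
  have hcQ : ((Aᶜ).card : ℚ) + A.card = K := by exact_mod_cast hcc
  have hKQ : (5 : ℚ) ≤ K := by exact_mod_cast hK
  have hA2Q : (2 : ℚ) ≤ A.card := by exact_mod_cast hA2
  by_cases hfull : (Aᶜ).card = 0
  · rw [hfull] at e1 hcQ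
    push_cast at e1 hcQ
    nlinarith
  · obtain ⟨i', hi'⟩ := Finset.card_pos.1 (Nat.pos_of_ne_zero hfull)
    have hi'' := Finset.mem_compl.1 hi'
    have e2 := trunc_formula i' A ((1 - f) / f) _ _ (hout i' hi'').1 (hout i' hi'').2
    rw [hT i', mul_zero] at e2
    have rcast : (((Aᶜ).card - 1 : ℕ) : ℚ) = (Aᶜ).card - 1 := by
      push_cast [Nat.cast_sub (by omega : 1 ≤ (Aᶜ).card)]; ring
    rw [rcast] at e2
    have hr1 : (1 : ℚ) ≤ (Aᶜ).card := by exact_mod_cast Nat.pos_of_ne_zero hfull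
    refine arith_core ((A.card : ℚ) - 1) (Aᶜ).card _ hy (by linarith) hr1 (by linarith) e1.symm ?_
    rw [e2]
    ring

theorem stmt19 (K L : ℕ) (hK : 5 ≤ K) (hL : 1 ≤ L) [NeZero L]
    (s : Fin K → ZMod L → ℕ) (hbin : ∀ i t, s i t = 0 ∨ s i t = 1)
    (n d : ℕ) (hn : 0 < n) (hd : 0 < d) (hcop : Nat.Coprime n d)
    (hf0 : 0 < (n : ℚ) / (d : ℚ)) (hf1 : (n : ℚ) / (d : ℚ) < 1)
    (hduty : ∀ i, duty (s i) = (n : ℚ) / (d : ℚ))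
    (hTI : IsTI s (K - 3))
    (hR : ∀ (i : Fin K) (τ : Fin K → ZMod L), 0 < R s (K - 3) i τ)
    (hprime : Nat.Prime (K - 3)) (heven : Even (K - 2))
    (hgcd : Nat.gcd ((K - 2) / 2) d = 1) :
    IsSI s := by
  classical
  have hLQ : (L : ℚ) ≠ 0 := by exact_mod_cast NeZero.ne L
  set f : ℚ := (n : ℚ) / d with hfdef
  set x : Fin K → ZMod L → ℚ := fun j t => (s j t : ℚ) with hxdef
  have hx : ∀ j, ∑ t, x j t = f * L := by
    intro j
    have := hduty j
    unfold duty at this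
    rw [div_eq_iff hLQ] at this
    exact this
  have hM : ∀ i, ∀ τ : Fin K → ZMod L, (Rcount s (K - 3) i τ : ℚ) +
      ∑ t, Mind i (fun j => x j (t + τ j)) (fun j => 1 - x j (t + τ j)) = f * L := by
    intro i τ
    rw [← hx i, ← sum_shift_right (x i) (τ i), Rcount, Finset.card_filter]
    push_cast
    rw [← Finset.sum_add_distrib]
    apply Finset.sum_congr rfl
    intro t _
    exact Mind_eval hK i (fun j => s j (t + τ j)) (fun j => hbin j _)
  have hRc : ∀ i, ∀ τ τ' : Fin K → ZMod L,
      (Rcount s (K - 3) i τ : ℚ) = Rcount s (K - 3) i τ' := by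
    intro i τ τ'
    have := hTI i τ τ'
    unfold R at this
    rwa [div_left_inj' hLQ] at this
  have hU := U_zero hK x f hf0 hf1 hx
    (fun i => f * L - Rcount s (K - 3) i 0) (fun i τ => by
      rw [← hRc i τ 0, ← hM i τ]; ring)
  have hH : ∀ A : Finset (Fin K), ∀ τ, (Hcorr s A τ : ℚ) = L * f ^ A.card := by
    intro A τ
    unfold Hcorr
    push_cast
    have h1 : ∀ t, ∏ j ∈ A, (s j (t + τ j) : ℚ)
        = ∑ B ∈ A.powerset, (∏ j ∈ B, (x j (t + τ j) - f)) * ∏ j ∈ A \ B, f := by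
      intro t
      rw [← Finset.prod_add]
      apply Finset.prod_congr rfl
      intro j _
      simp [hxdef]
    simp only [h1]
    rw [Finset.sum_comm, Finset.sum_eq_single ∅]
    · simp [ZMod.card]
    · intro B _ hB
      rw [← Finset.sum_mul, hU B (Finset.nonempty_iff_ne_empty.2 hB) τ, zero_mul]
    · simp
  intro A _ τ τ'
  have : (Hcorr s A τ : ℚ) = Hcorr s A τ' := by rw [hH, hH]
  exact_mod_cast this
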